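/- arXiv:math/9809185 — 2 statements merged into one kernel-verified Lean document; each statement's English description precedes it below -/
import Mathlib

section
/- Let p ≥ 2 and let x ∈ F(p) have normal form x = x_{i₁}^{r₁}⋯x_{iₙ}^{rₙ}·x_{jₘ}^{-sₘ}⋯x_{j₁}^{-s₁}. Then the normal form is a shortest word representing x in the infinite generating set {x_i : i ∈ ℕ}: every word in the generators x_i (i ∈ ℕ) and their inverses that represents x has length at least r₁+⋯+rₙ + s₁+⋯+sₘ. In particular, |x|_p ≥ r₁+⋯+rₙ + s₁+⋯+sₘ. -/
open scoped BigOperators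

/-- Relators of Thompson's group `F(p)`: `x_i⁻¹ x_j x_i x_{j+p-1}⁻¹` for `i < j`. -/
def thompsonRels (p : ℕ) : Set (FreeGroup ℕ) :=
  { rel | ∃ i j : ℕ, i < j ∧
      rel = (FreeGroup.of i)⁻¹ * FreeGroup.of j * FreeGroup.of i *
        (FreeGroup.of (j + p - 1))⁻¹ }

/-- Thompson's group `F(p)`, presented with generators `x_i` (`i : ℕ`) and relations
`x_i⁻¹ · x_j · x_i = x_{j+p-1}` for `i < j`. -/
def FP (p : ℕ) : Type := PresentedGroup (thompsonRels p)

instance (p : ℕ) : Group (FP p) :=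
  inferInstanceAs (Group (PresentedGroup (thompsonRels p)))

/-- The generator `x_i` of `F(p)`. -/
def xg (p : ℕ) (i : ℕ) : FP p := PresentedGroup.of (rels := thompsonRels p) i

/-- Word length of `x : G` with respect to a set `S` of generators: the least length of a
word in elements of `S ∪ S⁻¹` whose product is `x`. -/
noncomputable def wordLength {G : Type*} [Group G] (S : Set G) (x : G) : ℕ :=
  sInf { n : ℕ | ∃ w : List G, w.length = n ∧ (∀ g ∈ w, g ∈ S ∨ g⁻¹ ∈ S) ∧ w.prod = x }

/-- The word length `|x|_p` on `F(p)`, with respect to the generators `x_0, …, x_{p-1}`. -/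
noncomputable def wlen (p : ℕ) (x : FP p) : ℕ :=
  wordLength { g : FP p | ∃ i, i < p ∧ g = xg p i } x

/-- The data of a candidate normal form
`x_{i₁}^{r₁} ⋯ x_{iₙ}^{rₙ} · x_{jₘ}^{-sₘ} ⋯ x_{j₁}^{-s₁}` in `F(p)`. -/
structure NFData (p : ℕ) where
  n : ℕ
  m : ℕ
  i : Fin n → ℕ
  r : Fin n → ℕ
  j : Fin m → ℕ
  s : Fin m → ℕ

namespace NFData

variable {p : ℕ}

/-- The element of `F(p)` represented by the normal form data, namely
`x_{i₁}^{r₁} ⋯ x_{iₙ}^{rₙ} · (x_{j₁}^{s₁} ⋯ x_{jₘ}^{sₘ})⁻¹`. -/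
def elem (d : NFData p) : FP p :=
  (List.ofFn fun k => xg p (d.i k) ^ d.r k).prod *
    ((List.ofFn fun l => xg p (d.j l) ^ d.s l).prod)⁻¹

/-- The generator with index `a` occurs in `d` (with positive or negative exponent). -/
def Occurs (d : NFData p) (a : ℕ) : Prop :=
  (∃ k, d.i k = a) ∨ (∃ l, d.j l = a)

/-- `d` is a normal form of `x ∈ F(p)`: the indices are strictly increasing, the exponents
are at least `1`, `iₙ ≠ jₘ` when both parts are nonempty, whenever a generator and its
inverse both occur one of the following `p-1` generators (or its inverse) occurs as well,
and the corresponding product equals `x`. -/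
def IsNormalFormOf (d : NFData p) (x : FP p) : Prop :=
  StrictMono d.i ∧ StrictMono d.j ∧
    (∀ k, 1 ≤ d.r k) ∧ (∀ l, 1 ≤ d.s l) ∧
    (∀ (hn : 0 < d.n) (hm : 0 < d.m),
      d.i ⟨d.n - 1, Nat.sub_lt hn Nat.one_pos⟩ ≠ d.j ⟨d.m - 1, Nat.sub_lt hm Nat.one_pos⟩) ∧
    (∀ a : ℕ, (∃ k, d.i k = a) → (∃ l, d.j l = a) →
      ∃ b : ℕ, a < b ∧ b ≤ a + p - 1 ∧ d.Occurs b) ∧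
    x = d.elem

/-- The quantity `D(x) = r₁ + ⋯ + rₙ + s₁ + ⋯ + sₘ + iₙ + jₘ` (the terms `iₙ`, `jₘ` being
omitted when `n = 0`, resp. `m = 0`). -/
def D (d : NFData p) : ℕ :=
  (∑ k, d.r k) + (∑ l, d.s l) +
    (if hn : 0 < d.n then d.i ⟨d.n - 1, Nat.sub_lt hn Nat.one_pos⟩ else 0) +
    (if hm : 0 < d.m then d.j ⟨d.m - 1, Nat.sub_lt hm Nat.one_pos⟩ else 0)

end NFData

/-- The tail sum `r_k + r_{k+1} + ⋯ + r_n`. -/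
def tailSum {n : ℕ} (r : Fin n → ℕ) (k : Fin n) : ℕ :=
  ∑ l ∈ Finset.univ.filter (fun l => k ≤ l), r l
/-- `N(x)` associated to a normal form in `F(2)` (Theorem 3):
the maximum of `i_k + r_k + ⋯ + r_n + 1` and `j_l + s_l + ⋯ + s_m + 1`. -/
def NFData.N2 (d : NFData 2) : ℕ :=
  max (Finset.univ.sup fun k => d.i k + tailSum d.r k + 1)
      (Finset.univ.sup fun l => d.j l + tailSum d.s l + 1)

/-- `N(x)` associated to a normal form in `F(p)` (Theorem 6):
the maximum of `⌊i_k/(p-1)⌋ + r_k + ⋯ + r_n + 1` and `⌊j_l/(p-1)⌋ + s_l + ⋯ + s_m + 1`. -/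
def NFData.Ngen {p : ℕ} (d : NFData p) : ℕ :=
  max (Finset.univ.sup fun k => d.i k / (p - 1) + tailSum d.r k + 1)
      (Finset.univ.sup fun l => d.j l / (p - 1) + tailSum d.s l + 1)

/-- `N(x) = max { i_k + r_k + ⋯ + r_n + 1 }` for a positive word (Proposition 2). -/
def posN {n : ℕ} (i r : Fin n → ℕ) : ℕ :=
  Finset.univ.sup fun k => i k + tailSum r k + 1

/-- `N₁(x) = max { ⌊i_k/(p-1)⌋ + r_k + ⋯ + r_n + 1 }` (Proposition 4). -/
def posN1 (p : ℕ) {n : ℕ} (i r : Fin n → ℕ) : ℕ :=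
  Finset.univ.sup fun k => i k / (p - 1) + tailSum r k + 1

/-- `N₂(x) = max { i_k + (p-1)(r_k + ⋯ + r_n) + 1 }` (Proposition 5). -/
def posN2 (p : ℕ) {n : ℕ} (i r : Fin n → ℕ) : ℕ :=
  Finset.univ.sup fun k => i k + (p - 1) * tailSum r k + 1

/-- `x ∈ ℤ[1/p]`. -/
def IsPAdicRational (p : ℕ) (x : ℝ) : Prop :=
  ∃ (a : ℤ) (n : ℕ), x = (a : ℝ) / (p : ℝ) ^ n

/-- Thompson's group `F(p)` realized as a set of permutations of `ℝ`: orientation-preserving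
piecewise-linear homeomorphisms of `[0,1]` (extended by the identity outside `[0,1]`) with
finitely many breakpoints, all in `ℤ[1/p]`, whose slopes are integer powers of `p`. -/
def PLSet (p : ℕ) : Set (Equiv.Perm ℝ) :=
  { f | Monotone f ∧ (∀ t : ℝ, t ≤ 0 → f t = t) ∧ (∀ t : ℝ, 1 ≤ t → f t = t) ∧
    ∃ B : Finset ℝ, (∀ b ∈ B, IsPAdicRational p b) ∧
      ∀ t : ℝ, t ∉ (B : Set ℝ) →
        ∃ ε > (0 : ℝ), ∃ (k : ℤ) (c : ℝ), ∀ s : ℝ, |s - t| < ε → f s = (p : ℝ) ^ k * s + c }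

/-- The map `Φ_p` on homeomorphisms: `(Φ_p f)(t) = t` for `t ≤ 1 - 1/p`, and
`(Φ_p f)(t) = ((p-1) + f(pt - (p-1)))/p` for `t ≥ 1 - 1/p`. -/
noncomputable def PhiMap (p : ℕ) (f : ℝ → ℝ) : ℝ → ℝ := fun t =>
  if t ≤ 1 - 1 / (p : ℝ) then t
  else (((p : ℝ) - 1) + f ((p : ℝ) * t - ((p : ℝ) - 1))) / (p : ℝ)

/-- The piecewise-linear homeomorphism `f_i` of `ℝ` corresponding to the generator `x_i`
of `F(p)`. -/
noncomputable def fgen (p : ℕ) (i : ℕ) : ℝ → ℝ := fun t =>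
  if t ≤ (i : ℝ) then t
  else if t ≤ (i : ℝ) + 1 then (p : ℝ) * t + (i : ℝ) * (1 - (p : ℝ))
  else t + (p : ℝ) - 1
namespace TF

/-- Points of the boundary: a root index and an infinite `p`-ary word. -/
abbrev X (p : ℕ) := ℕ × Stream' (Fin p)
/-- Nodes of the infinite forest. -/
abbrev T (p : ℕ) := ℕ × List (Fin p)

variable {p : ℕ}

def emb (t : T p) (s : Stream' (Fin p)) : X p := (t.1, t.2 ++ₛ s)

/-- contraction -/
def gf (c : ℕ) (x : X p) : X p :=
  if x.1 < c then x
  else if h : x.1 - c < p then (c, Stream'.cons ⟨x.1 - c, h⟩ x.2)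
  else (x.1 - (p - 1), x.2)

def gi (c : ℕ) (x : X p) : X p :=
  if x.1 < c then x
  else if x.1 = c then (c + (x.2.head : ℕ), x.2.tail)
  else (x.1 + (p - 1), x.2)

def tg (c : ℕ) (x : T p) : T p :=
  if x.1 < c then x
  else if h : x.1 - c < p then (c, ⟨x.1 - c, h⟩ :: x.2)
  else (x.1 - (p - 1), x.2)

theorem gi_gf (hp : 2 ≤ p) (c : ℕ) (x : X p) : gi c (gf c x) = x := by
  obtain ⟨j, s⟩ := x
  unfold gf
  dsimp only
  split_ifs with h1 h2
  · simp [gi, h1]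
  · simp only [gi, lt_irrefl, if_false, if_true]
    ext1
    · simp; omega
    · simp
  · have h3 : ¬ (j - (p-1) < c) := by omega
    have h4 : ¬ (j - (p-1) = c) := by omega
    simp only [gi, h3, h4, if_false]
    ext1
    · simp; omega
    · simp

theorem gf_gi (hp : 2 ≤ p) (c : ℕ) (x : X p) : gf c (gi c x) = x := by
  obtain ⟨j, s⟩ := x
  unfold gi
  dsimp only
  split_ifs with h1 h2
  · simp [gf, h1]
  · subst h2
    have := s.head.2
    have h3 : ¬ (j + (s.head : ℕ) < j) := by omega
    have h4 : (j + (s.head : ℕ)) - j < p := by omega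
    simp only [gf, h3, h4, if_false, dif_pos]
    ext1
    · rfl
    · simp [Stream'.eta]
  · have h3 : ¬ (j + (p-1) < c) := by omega
    have h4 : ¬ (j + (p-1) - c < p) := by omega
    simp only [gf, h3, h4, if_false]
    ext1
    · simp
    · simp

def G (hp : 2 ≤ p) (c : ℕ) : Equiv.Perm (X p) where
  toFun := gf c
  invFun := gi c
  left_inv := gi_gf hp c
  right_inv := gf_gi hp c

theorem G_rel (hp : 2 ≤ p) (i j : ℕ) (hij : i < j) :
    G hp j * G hp i = G hp i * G hp (j + p - 1) := by
  ext1 ⟨n, s⟩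
  simp only [Equiv.Perm.mul_apply]
  show gf j (gf i (n, s)) = gf i (gf (j + p - 1) (n, s))
  by_cases h1 : n < i
  · have : n < j := by omega
    have : n < j + p - 1 := by omega
    simp [gf, *]
  by_cases h2 : n - i < p
  · have : n < j + p - 1 := by omega
    simp [gf, *]
  by_cases h3 : n < j + p - 1
  · have : n - (p - 1) < j := by omega
    simp [gf, *]
  by_cases h4 : n - (j + p - 1) < p
  · have h5 : ¬ (n - (p - 1) < j) := by omega
    have h6 : n - (p - 1) - j < p := by omega
    have h7 : ¬ (j + p - 1 < i) := by omega
    have h8 : ¬ (j + p - 1 - i < p) := by omega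
    have h9 : n - (p - 1) - j = n - (j + p - 1) := by omega
    have h10 : j + p - 1 - (p - 1) = j := by omega
    simp [gf, *]
  · have h5 : ¬ (n - (p - 1) < j) := by omega
    have h6 : ¬ (n - (p - 1) - j < p) := by omega
    have h7 : ¬ (n - (p - 1) < i) := by omega
    have h8 : ¬ (n - (p - 1) - i < p) := by omega
    simp [gf, *]

/-- The action. -/
def act (hp : 2 ≤ p) : FP p →* Equiv.Perm (X p) :=
  PresentedGroup.toGroup (rels := thompsonRels p) (f := G hp) (by
    rintro r ⟨i, j, hij, rfl⟩
    simp only [map_mul, map_inv, FreeGroup.lift_apply_of]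
    rw [mul_inv_eq_one, mul_assoc, G_rel hp i j hij, inv_mul_cancel_left])

theorem act_xg (hp : 2 ≤ p) (i : ℕ) : act hp (xg p i) = G hp i :=
  PresentedGroup.toGroup.of _

def Maps (f : Equiv.Perm (X p)) (I J : T p) : Prop := ∀ s, f (emb I s) = emb J s

def Bad (f : Equiv.Perm (X p)) : Set (T p) := {I | ¬ ∃ J, Maps f I J}

theorem append_inj (hp : 2 ≤ p) (u : List (Fin p)) : ∀ v : List (Fin p),
    (∀ s, u ++ₛ s = v ++ₛ s) → u = v := by
  have key : ∀ (b : Fin p) (v : List (Fin p)), ¬ ∀ s : Stream' (Fin p), s = (b :: v) ++ₛ s := by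
    intro b v h
    have : ∃ a : Fin p, a ≠ b := by
      have : Nontrivial (Fin p) := Fin.nontrivial_iff_two_le.2 hp
      exact exists_ne b
    obtain ⟨a, ha⟩ := this
    have := congrArg Stream'.head (h (Stream'.const a))
    rw [Stream'.cons_append_stream, Stream'.head_cons] at this
    exact ha this
  induction u with
  | nil =>
    intro v h
    cases v with
    | nil => rfl
    | cons b v => exact (key b v h).elim
  | cons a u ih =>
    intro v h
    cases v with
    | nil => exact (key a u (fun s => (h s).symm)).elim
    | cons b v =>
      have h1 : ∀ s, a = b ∧ u ++ₛ s = v ++ₛ s := by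
        intro s
        have := h s
        rw [Stream'.cons_append_stream, Stream'.cons_append_stream] at this
        exact ⟨by simpa using congrArg Stream'.head this, by simpa using congrArg Stream'.tail this⟩
      rw [ih v (fun s => (h1 s).2), (h1 (Stream'.const a)).1]

theorem emb_inj (hp : 2 ≤ p) {I J : T p} (h : ∀ s, emb I s = emb J s) : I = J := by
  apply Prod.ext
  · have h0 := h (Stream'.const ⟨0, by omega⟩)
    exact (Prod.mk.inj h0).1
  · exact append_inj hp _ _ (fun s => (Prod.mk.inj (h s)).2)

theorem Maps.inv {f : Equiv.Perm (X p)} {I J : T p} (h : Maps f I J) : Maps f⁻¹ J I := by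
  intro s
  rw [Equiv.Perm.inv_eq_iff_eq, h s]

theorem Maps.mul {f g : Equiv.Perm (X p)} {I J K : T p} (h : Maps g I J) (h' : Maps f J K) :
    Maps (f * g) I K := by
  intro s
  rw [Equiv.Perm.mul_apply, h s, h' s]

theorem Maps.uniq (hp : 2 ≤ p) {f : Equiv.Perm (X p)} {I J K : T p} (h : Maps f I J)
    (h' : Maps f I K) : J = K := emb_inj hp (fun s => by rw [← h s, h' s])

theorem Maps.child {f : Equiv.Perm (X p)} {I J : T p} (h : Maps f I J) (k : Fin p) :
    Maps f (I.1, I.2 ++ [k]) (J.1, J.2 ++ [k]) := by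
  intro s
  have := h (Stream'.cons k s)
  simp only [emb] at this ⊢
  rw [Stream'.append_append_stream, Stream'.append_append_stream]
  exact this

theorem maps_G (hp : 2 ≤ p) (c : ℕ) (I : T p) : Maps (G hp c) I (tg c I) := by
  intro s
  show gf c _ = _
  obtain ⟨j, u⟩ := I
  simp only [gf, emb, tg]
  by_cases h1 : j < c
  · simp [h1]
  by_cases h2 : j - c < p
  · simp [h1, h2, Stream'.cons_append_stream]
  · simp [h1, h2]

theorem bad_mul (hp : 2 ≤ p) (f g : Equiv.Perm (X p)) :
    (Bad (f * g)).encard ≤ (Bad f).encard + (Bad g).encard := by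
  classical
  have h1 : Bad (f * g) ⊆ {I | ∃ J, Maps g I J ∧ J ∈ Bad f} ∪ Bad g := by
    intro I hI
    by_cases h : ∃ J, Maps g I J
    · obtain ⟨J, hJ⟩ := h
      left
      refine ⟨J, hJ, ?_⟩
      rintro ⟨K, hK⟩
      exact hI ⟨K, hJ.mul hK⟩
    · right; exact h
  refine (Set.encard_le_encard h1).trans ((Set.encard_union_le _ _).trans ?_)
  refine add_le_add ?_ le_rfl
  let F : T p → T p := fun I => if h : ∃ J, Maps g I J then h.choose else I
  have hF : ∀ I, (∃ J, Maps g I J) → Maps g I (F I) := by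
    intro I h
    simp only [F, dif_pos h]
    exact h.choose_spec
  apply Set.encard_le_encard_of_injOn (f := F)
  · rintro I ⟨J, hJ, hb⟩
    rw [Maps.uniq hp (hF I ⟨J, hJ⟩) hJ]
    exact hb
  · rintro I ⟨J, hJ, -⟩ I' ⟨J', hJ', -⟩ h
    have h1 := hF I ⟨J, hJ⟩
    have h2 := hF I' ⟨J', hJ'⟩
    rw [h] at h1
    exact Maps.uniq hp h1.inv h2.inv

theorem bad_one : Bad (1 : Equiv.Perm (X p)) = ∅ := by
  ext I
  simp only [Bad, Set.mem_ofPred_eq, Set.mem_empty_iff_false, iff_false, not_not]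
  exact ⟨I, fun s => rfl⟩

theorem bad_G (hp : 2 ≤ p) (c : ℕ) : Bad (G hp c) = ∅ := by
  ext I
  simp only [Bad, Set.mem_ofPred_eq, Set.mem_empty_iff_false, iff_false, not_not]
  exact ⟨_, maps_G hp c I⟩

theorem bad_Ginv (hp : 2 ≤ p) (c : ℕ) : Bad (G hp c)⁻¹ ⊆ {(c, [])} := by
  rintro ⟨j, u⟩ hI
  by_contra hne
  apply hI
  by_cases h1 : j < c
  · exact ⟨(j, u), fun s => by show gi c _ = _; simp [gi, emb, h1]⟩
  by_cases h2 : j = c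
  · subst h2
    cases u with
    | nil => exact (hne rfl).elim
    | cons k u =>
      exact ⟨(j + k, u), fun s => by
        show gi j _ = _; simp [gi, emb, Stream'.cons_append_stream]⟩
  · exact ⟨(j + (p - 1), u), fun s => by show gi c _ = _; simp [gi, emb, h1, h2]⟩

noncomputable def ell (f : Equiv.Perm (X p)) : ℕ∞ := (Bad f).encard + (Bad f⁻¹).encard

theorem ell_mul (hp : 2 ≤ p) (f g : Equiv.Perm (X p)) : ell (f * g) ≤ ell f + ell g := by
  unfold ell
  have h1 := bad_mul hp f g
  have h2 := bad_mul hp g⁻¹ f⁻¹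
  rw [mul_inv_rev]
  calc _ ≤ _ := add_le_add h1 h2
    _ = _ := by ring

theorem ell_inv (f : Equiv.Perm (X p)) : ell f⁻¹ = ell f := by
  unfold ell
  rw [inv_inv, add_comm]

theorem ell_G (hp : 2 ≤ p) (c : ℕ) : ell (G hp c) ≤ 1 := by
  unfold ell
  rw [bad_G, Set.encard_empty, zero_add]
  exact (Set.encard_le_encard (bad_Ginv hp c)).trans (by simp)

theorem ell_word (hp : 2 ≤ p) (w : List (FP p))
    (hw : ∀ g ∈ w, ∃ i : ℕ, g = xg p i ∨ g = (xg p i)⁻¹) :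
    ell (act hp w.prod) ≤ w.length := by
  induction w with
  | nil => simp [ell, bad_one]
  | cons g w ih =>
    rw [List.prod_cons, map_mul]
    refine (ell_mul hp _ _).trans ?_
    have h1 : ell (act hp g) ≤ 1 := by
      obtain ⟨i, h | h⟩ := hw g (by simp)
      · rw [h, act_xg]; exact ell_G hp i
      · rw [h, map_inv, act_xg, ell_inv]; exact ell_G hp i
    have h2 := ih (fun g hg => hw g (by simp [hg]))
    calc _ ≤ 1 + (w.length : ℕ∞) := add_le_add h1 h2
      _ = _ := by push_cast [List.length_cons]; ring

/-- positive words -/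
def pos (hp : 2 ≤ p) (L : List ℕ) : Equiv.Perm (X p) := (L.map (G hp)).prod

def tact (L : List ℕ) (t : T p) : T p := L.foldr tg t

theorem maps_pos (hp : 2 ≤ p) (L : List ℕ) (I : T p) : Maps (pos hp L) I (tact L I) := by
  induction L with
  | nil => intro s; rfl
  | cons c L ih =>
    have : pos hp (c :: L) = G hp c * pos hp L := by simp [pos]
    rw [this]
    exact ih.mul (maps_G hp c _)

theorem tg_inv (hp : 2 ≤ p) {c : ℕ} {t : T p} {j : ℕ} {w : List (Fin p)} (h : tg c t = (j, w)) :
    (j < c ∧ t = (j, w)) ∨ (c < j ∧ t = (j + (p - 1), w)) ∨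
      (j = c ∧ ∃ k v, w = k :: v ∧ t = (c + (k : ℕ), v)) := by
  obtain ⟨n, u⟩ := t
  unfold tg at h
  dsimp only at h
  split_ifs at h with h1 h2
  · left
    obtain ⟨rfl, rfl⟩ := Prod.mk.inj h
    exact ⟨h1, rfl⟩
  · right; right
    obtain ⟨rfl, rfl⟩ := Prod.mk.inj h
    refine ⟨rfl, _, _, rfl, ?_⟩
    ext1
    · simp; omega
    · rfl
  · right; left
    obtain ⟨rfl, rfl⟩ := Prod.mk.inj h
    refine ⟨by omega, ?_⟩
    ext1
    · simp; omega
    · rfl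

theorem tact_fix (hp : 2 ≤ p) (L : List ℕ) (x : ℕ) (hL : ∀ a ∈ L, x < a) (t : T p)
    (h : tact L t = (x, [])) : t = (x, []) := by
  induction L with
  | nil => exact h
  | cons c L ih =>
    have hc := hL c (by simp)
    apply ih (fun a ha => hL a (by simp [ha]))
    have h' : tg c (tact L t) = (x, []) := h
    rcases tg_inv hp h' with ⟨_, h⟩ | ⟨h0, h⟩ | ⟨h0, h⟩
    · exact h
    · omega
    · omega

theorem caret_base (hp : 2 ≤ p) (L : List ℕ) (c : ℕ) (hs : L.Pairwise (· ≤ ·))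
    (hL : ∀ a ∈ L, c ≤ a) (m : Fin p → ℕ)
    (h : ∀ k : Fin p, tact L ((m k, []) : T p) = (c + (k : ℕ), [])) :
    (∀ k, m k = c + (k : ℕ)) ∧ ∀ a ∈ L, c + p ≤ a := by
  have h2 : ∀ a ∈ L, c + p ≤ a := by
    cases L with
    | nil => simp
    | cons e L =>
      have he : c + p ≤ e := by
        by_contra hlt
        have hce := hL e (by simp)
        have h' : tg e (tact L ((m ⟨e - c, by omega⟩, []) : T p)) = (c + (e - c), []) :=
          h ⟨e - c, by omega⟩
        rcases tg_inv hp h' with ⟨_, h⟩ | ⟨h0, h⟩ | ⟨h0, k, v, h, _⟩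
        · omega
        · omega
        · cases h
      intro a ha
      rcases List.mem_cons.1 ha with rfl | ha
      · exact he
      · exact he.trans ((List.pairwise_cons.1 hs).1 a ha)
  refine ⟨fun k => ?_, h2⟩
  have := tact_fix hp L (c + k) (fun a ha => by have := h2 a ha; omega) _ (h k)
  exact congrArg Prod.fst this

theorem caret (hp : 2 ≤ p) (L : List ℕ) (hs : L.Pairwise (· ≤ ·)) (m : Fin p → ℕ) :
    ∀ (j : ℕ) (u : List (Fin p)),
    (∀ k : Fin p, tact L ((m k, []) : T p) = (j, u ++ [k])) →
    ∃ n, (∀ k, m k = n + (k : ℕ)) ∧ n ∈ L ∧ ∀ b, n < b → b < n + p → b ∉ L := by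
  induction L with
  | nil =>
    intro j u h
    have := congrArg Prod.snd (h ⟨0, by omega⟩)
    simp [tact] at this
  | cons c L ih =>
    intro j u h
    have h' : ∀ k, tg c (tact L ((m k, []) : T p)) = (j, u ++ [k]) := h
    obtain ⟨hs1, hs2⟩ := List.pairwise_cons.1 hs
    have fin : (∃ j u, ∀ k : Fin p, tact L ((m k, []) : T p) = (j, u ++ [k])) →
        ∃ n, (∀ k, m k = n + (k : ℕ)) ∧ n ∈ c :: L ∧ ∀ b, n < b → b < n + p → b ∉ c :: L := by
      rintro ⟨j, u, h⟩
      obtain ⟨n, h1, h2, h3⟩ := ih hs2 j u h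
      refine ⟨n, h1, by simp [h2], fun b hb hb' hmem => ?_⟩
      rcases List.mem_cons.1 hmem with rfl | hm
      · have := hs1 n h2; omega
      · exact h3 b hb hb' hm
    rcases lt_trichotomy j c with hj | hj | hj
    · apply fin
      refine ⟨j, u, fun k => ?_⟩
      rcases tg_inv hp (h' k) with ⟨_, h⟩ | ⟨h0, h⟩ | ⟨h0, h⟩
      · exact h
      · omega
      · omega
    · cases u with
      | cons l u =>
        apply fin
        refine ⟨c + l, u, fun k => ?_⟩
        rcases tg_inv hp (h' k) with ⟨_, h⟩ | ⟨h0, h⟩ | ⟨h0, k', v, hw, h⟩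
        · omega
        · omega
        · rw [List.cons_append] at hw
          obtain ⟨rfl, rfl⟩ := List.cons.inj hw
          exact h
      | nil =>
        have hb : ∀ k : Fin p, tact L ((m k, []) : T p) = (c + (k : ℕ), []) := by
          intro k
          rcases tg_inv hp (h' k) with ⟨_, h⟩ | ⟨h0, h⟩ | ⟨h0, k', v, hw, h⟩
          · omega
          · omega
          · rw [List.nil_append] at hw
            obtain ⟨rfl, rfl⟩ := List.cons.inj hw
            exact h
        obtain ⟨h1, h2⟩ := caret_base hp L c hs2 hs1 m hb
        refine ⟨c, h1, by simp, fun b hb hb' hmem => ?_⟩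
        rcases List.mem_cons.1 hmem with rfl | hm
        · omega
        · have := h2 b hm; omega
    · apply fin
      refine ⟨j + (p - 1), u, fun k => ?_⟩
      rcases tg_inv hp (h' k) with ⟨_, h⟩ | ⟨h0, h⟩ | ⟨h0, h⟩
      · omega
      · exact h
      · omega

theorem not_maps_Ginv (hp : 2 ≤ p) (c : ℕ) : ((c, []) : T p) ∈ Bad (G hp c)⁻¹ := by
  rintro ⟨J, hJ⟩
  have h : tg c J = (c, []) := Maps.uniq hp (maps_G hp c J) (by simpa using hJ.inv)
  rcases tg_inv hp h with ⟨h0, h⟩ | ⟨h0, h⟩ | ⟨h0, k, v, h, _⟩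
  · omega
  · omega
  · cases h

theorem bad_pos_inv (hp : 2 ≤ p) (L : List ℕ) : (L.length : ℕ∞) ≤ (Bad (pos hp L)⁻¹).encard := by
  induction L with
  | nil => simp
  | cons c L ih =>
    have hpos : (pos hp (c :: L))⁻¹ = (pos hp L)⁻¹ * (G hp c)⁻¹ := by simp [pos]
    have hinj : Function.Injective (tg (p := p) c) := by
      intro I J h
      have h1 := maps_G hp c I
      rw [h] at h1
      exact Maps.uniq hp h1.inv (maps_G hp c J).inv
    have hnot : ((c, []) : T p) ∉ tg c '' Bad (pos hp L)⁻¹ := by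
      rintro ⟨I, -, hI⟩
      apply not_maps_Ginv hp c
      have := (maps_G hp c I).inv
      rw [hI] at this
      exact ⟨I, this⟩
    have hsub : insert ((c, []) : T p) (tg c '' Bad (pos hp L)⁻¹) ⊆ Bad (pos hp (c :: L))⁻¹ := by
      rw [hpos]
      rintro I (rfl | ⟨I, hI, rfl⟩)
      · rintro ⟨J, hJ⟩
        apply not_maps_Ginv hp c
        refine ⟨tact L J, ?_⟩
        have := hJ.mul (maps_pos hp L J)
        simpa using this
      · rintro ⟨J, hJ⟩
        apply hI
        refine ⟨J, ?_⟩
        have := (maps_G hp c I).mul hJ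
        simpa using this
    refine le_trans ?_ (Set.encard_le_encard hsub)
    rw [Set.encard_insert_of_notMem hnot, hinj.encard_image]
    push_cast [List.length_cons]
    gcongr

theorem bad_pos_fin (hp : 2 ≤ p) (L : List ℕ) : (Bad (pos hp L)⁻¹).Finite := by
  rw [← Set.encard_ne_top_iff]
  have h1 : ell (pos hp L) ≤ L.length := by
    have := ell_word hp (L.map (xg p)) (by
      intro g hg
      obtain ⟨i, -, rfl⟩ := List.mem_map.1 hg
      exact ⟨i, Or.inl rfl⟩)
    have h2 : act hp (L.map (xg p)).prod = pos hp L := by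
      rw [map_list_prod, List.map_map, pos]
      congr 1
    rw [h2] at this
    simpa using this
  have h2 : (Bad (pos hp L)⁻¹).encard ≤ ell (pos hp L) := le_add_self
  exact ne_top_of_le_ne_top (ENat.natCast_ne_top _) (h2.trans h1)

def Red (p : ℕ) (P Q : List ℕ) : Prop :=
  ∀ a, a ∈ P → a ∈ Q → ∃ b, a < b ∧ b < a + p ∧ (b ∈ P ∨ b ∈ Q)

theorem bad_sub (hp : 2 ≤ p) (P Q : List ℕ) (hP : P.Pairwise (· ≤ ·)) (hQ : Q.Pairwise (· ≤ ·))
    (hr : Red p P Q) : Bad (pos hp Q)⁻¹ ⊆ Bad (pos hp P * (pos hp Q)⁻¹) := by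
  intro I hI
  by_contra hI'
  set S : Set (T p) := Bad (pos hp Q)⁻¹ \ Bad (pos hp P * (pos hp Q)⁻¹) with hS
  have hSf : S.Finite := (bad_pos_fin hp Q).subset Set.sdiff_subset
  obtain ⟨I, ⟨hI1, hI2⟩, hmax⟩ := Set.exists_max_image S (fun I => I.2.length) hSf ⟨I, hI, hI'⟩
  have hI2' : ∃ J, Maps (pos hp P * (pos hp Q)⁻¹) I J := not_not.1 hI2
  obtain ⟨J, hJ⟩ := hI2'
  have hk : ∀ k : Fin p, ∃ m : ℕ, Maps (pos hp Q)⁻¹ (I.1, I.2 ++ [k]) (m, []) := by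
    intro k
    have hc := hJ.child k
    have hg : ∃ K, Maps (pos hp Q)⁻¹ (I.1, I.2 ++ [k]) K := by
      by_contra hb
      have := hmax (I.1, I.2 ++ [k]) ⟨hb, fun h => h ⟨_, hc⟩⟩
      simp at this
    obtain ⟨⟨m, v⟩, hK⟩ := hg
    rcases List.eq_nil_or_concat v with rfl | ⟨v', l, rfl⟩
    · exact ⟨m, hK⟩
    · exfalso
      have h1 := (maps_pos hp Q (m, v')).child l
      have h2 := hK.inv
      rw [inv_inv] at h2
      have h3 := Maps.uniq hp h1 (by simpa using h2)
      obtain ⟨h4, h5⟩ := Prod.mk.inj h3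
      obtain ⟨h5, -⟩ := List.append_inj' h5 rfl
      apply hI1
      refine ⟨(m, v'), ?_⟩
      have := (maps_pos hp Q (m, v')).inv
      rwa [show tact Q (m, v') = I from Prod.ext h4 h5] at this
  choose m hm using hk
  have hq : ∀ k : Fin p, tact Q ((m k, []) : T p) = (I.1, I.2 ++ [k]) := by
    intro k
    exact Maps.uniq hp (maps_pos hp Q _) (by simpa using (hm k).inv)
  have hpp : ∀ k : Fin p, tact P ((m k, []) : T p) = (J.1, J.2 ++ [k]) := by
    intro k
    refine Maps.uniq hp (maps_pos hp P _) ?_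
    have := (hm k).inv.mul (hJ.child k)
    simpa using this
  obtain ⟨n, h1, h2, h3⟩ := caret hp Q hQ m _ _ hq
  obtain ⟨n', h1', h2', h3'⟩ := caret hp P hP m _ _ hpp
  have hn : n' = n := by
    have a := h1 ⟨0, by omega⟩
    have b := h1' ⟨0, by omega⟩
    simp at a b
    omega
  subst hn
  obtain ⟨b, hb1, hb2, hb | hb⟩ := hr _ h2' h2
  · exact h3' b hb1 hb2 hb
  · exact h3 b hb1 hb2 hb

theorem ell_lower (hp : 2 ≤ p) (P Q : List ℕ) (hP : P.Pairwise (· ≤ ·))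
    (hQ : Q.Pairwise (· ≤ ·)) (hr : Red p P Q) :
    ((P.length + Q.length : ℕ) : ℕ∞) ≤ ell (pos hp P * (pos hp Q)⁻¹) := by
  have hr' : Red p Q P := fun a h1 h2 => by
    obtain ⟨b, h3, h4, h5⟩ := hr a h2 h1
    exact ⟨b, h3, h4, h5.symm⟩
  have h1 := (bad_pos_inv hp Q).trans (Set.encard_le_encard (bad_sub hp P Q hP hQ hr))
  have h2 := (bad_pos_inv hp P).trans (Set.encard_le_encard (bad_sub hp Q P hQ hP hr'))
  unfold ell
  rw [mul_inv_rev, inv_inv, add_comm P.length]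
  push_cast
  exact add_le_add h1 h2

/-- expanded word -/
def expand {n : ℕ} (i r : Fin n → ℕ) : List ℕ :=
  (List.ofFn fun k => List.replicate (r k) (i k)).flatten

theorem expand_length {n : ℕ} (i r : Fin n → ℕ) : (expand i r).length = ∑ k, r k := by
  simp [expand, List.length_flatten, List.map_ofFn, List.sum_ofFn, Function.comp_def]

theorem expand_mem {n : ℕ} (i r : Fin n → ℕ) (hr : ∀ k, 1 ≤ r k) (a : ℕ) :
    a ∈ expand i r ↔ ∃ k, i k = a := by
  simp only [expand, List.mem_flatten, List.mem_ofFn]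
  constructor
  · rintro ⟨l, ⟨k, rfl⟩, h⟩
    exact ⟨k, ((List.mem_replicate.1 h).2).symm⟩
  · rintro ⟨k, rfl⟩
    exact ⟨_, ⟨k, rfl⟩, List.mem_replicate.2 ⟨by have := hr k; omega, rfl⟩⟩

theorem expand_sorted {n : ℕ} (i r : Fin n → ℕ) (hi : StrictMono i) :
    (expand i r).Pairwise (· ≤ ·) := by
  unfold expand
  rw [List.pairwise_flatten]
  constructor
  · intro l hl
    obtain ⟨k, rfl⟩ := (List.mem_ofFn' _ _).1 hl
    exact List.pairwise_replicate.2 (Or.inr le_rfl)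
  · rw [List.pairwise_ofFn]
    intro k l hkl a ha b hb
    rw [(List.mem_replicate.1 ha).2, (List.mem_replicate.1 hb).2]
    exact (hi hkl).le

theorem expand_prod (hp : 2 ≤ p) {n : ℕ} (i r : Fin n → ℕ) :
    act hp (List.ofFn fun k => xg p (i k) ^ r k).prod = pos hp (expand i r) := by
  rw [map_list_prod, List.map_ofFn, pos, expand, List.map_flatten, List.prod_flatten,
    List.map_map, List.map_ofFn]
  congr 2
  funext k
  simp [act_xg]

theorem closure_eq (hp : 2 ≤ p) :
    Subgroup.closure { g : FP p | ∃ i, i < p ∧ g = xg p i } = ⊤ := by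
  have hx : ∀ i, xg p i ∈ Subgroup.closure { g : FP p | ∃ i, i < p ∧ g = xg p i } := by
    intro i
    induction i using Nat.strong_induction_on with
    | _ i ih =>
      by_cases hi : i < p
      · exact Subgroup.subset_closure ⟨i, hi, rfl⟩
      · have h : (xg p 0)⁻¹ * xg p (i - (p - 1)) * xg p 0 * (xg p i)⁻¹ = 1 := by
          have := PresentedGroup.one_of_mem (rels := thompsonRels p)
            (x := (FreeGroup.of 0)⁻¹ * FreeGroup.of (i - (p - 1)) * FreeGroup.of 0 *
              (FreeGroup.of i)⁻¹)
            ⟨0, i - (p - 1), by omega, by rw [show i - (p - 1) + p - 1 = i by omega]⟩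
          exact this
        rw [mul_inv_eq_one] at h
        rw [← h]
        exact mul_mem (mul_mem (inv_mem (ih 0 (by omega))) (ih _ (by omega))) (ih 0 (by omega))
  rw [eq_top_iff]
  have h := PresentedGroup.closure_range_of (thompsonRels p)
  have h' : Subgroup.closure (Set.range (xg p)) = ⊤ := h
  rw [← h', Subgroup.closure_le]
  rintro _ ⟨i, rfl⟩
  exact hx i

end TF

/-- The normal form is a shortest word representing `x` in the infinite
generating set `{x_i : i ∈ ℕ}`: every word in the `x_i` and their inverses representing
`x` has length at least `r₁ + ⋯ + rₙ + s₁ + ⋯ + sₘ`; in particular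
`|x|_p ≥ r₁ + ⋯ + rₙ + s₁ + ⋯ + sₘ`. -/
theorem statement16 (p : ℕ) (hp : 2 ≤ p) (x : FP p) (d : NFData p)
    (hd : d.IsNormalFormOf x) :
    (∀ w : List (FP p), (∀ g ∈ w, ∃ i : ℕ, g = xg p i ∨ g = (xg p i)⁻¹) → w.prod = x →
      (∑ k, d.r k) + (∑ l, d.s l) ≤ w.length) ∧
      (∑ k, d.r k) + (∑ l, d.s l) ≤ wlen p x := by
  have main : ∀ w : List (FP p), (∀ g ∈ w, ∃ i : ℕ, g = xg p i ∨ g = (xg p i)⁻¹) → w.prod = x →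
      (∑ k, d.r k) + (∑ l, d.s l) ≤ w.length := by
    intro w hw hx
    obtain ⟨hi, hj, hr, hs, -, hred, hel⟩ := hd
    have h1 := TF.ell_word hp w hw
    have h2 := TF.ell_lower hp (TF.expand d.i d.r) (TF.expand d.j d.s)
      (TF.expand_sorted _ _ hi) (TF.expand_sorted _ _ hj) (by
        intro a ha hb
        obtain ⟨b, h1, h2, h3⟩ := hred a ((TF.expand_mem _ _ hr a).1 ha)
          ((TF.expand_mem _ _ hs a).1 hb)
        refine ⟨b, h1, by omega, ?_⟩
        rcases h3 with h3 | h3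
        · exact Or.inl ((TF.expand_mem _ _ hr b).2 h3)
        · exact Or.inr ((TF.expand_mem _ _ hs b).2 h3))
    rw [TF.expand_length, TF.expand_length, ← TF.expand_prod hp, ← TF.expand_prod hp,
      ← map_inv, ← map_mul] at h2
    rw [hx, hel] at h1
    exact_mod_cast h2.trans h1
  refine ⟨main, ?_⟩
  unfold wlen wordLength
  apply le_csInf
  · have hx : x ∈ Subgroup.closure { g : FP p | ∃ i, i < p ∧ g = xg p i } := by
      rw [TF.closure_eq hp]; trivial
    rw [← Subgroup.mem_toSubmonoid, Subgroup.closure_toSubmonoid] at hx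
    obtain ⟨w, h1, h2⟩ := Submonoid.exists_list_of_mem_closure hx
    exact ⟨w.length, w, rfl, h1, h2⟩
  · rintro n ⟨w, rfl, hw, hx⟩
    apply main w _ hx
    intro g hg
    rcases hw g hg with ⟨i, -, h⟩ | ⟨i, -, h⟩
    · exact ⟨i, Or.inl h⟩
    · exact ⟨i, Or.inr (by rw [← h, inv_inv])⟩
end

section
/- Let p ≥ 2 and let x ∈ F(p) have normal form x = x_{i₁}^{r₁}⋯x_{iₙ}^{rₙ}·x_{jₘ}^{-sₘ}⋯x_{j₁}^{-s₁}. Then the largest indices appearing in the normal form are bounded by (p−1) times the word length of x: iₙ ≤ (p−1)·|x|_p (when n ≥ 1) and jₘ ≤ (p−1)·|x|_p (when m ≥ 1). -/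
open scoped BigOperators

namespace S17

variable {q : ℕ}

theorem xrel (q : ℕ) {i j : ℕ} (h : i < j) :
    xg (q+1) j * xg (q+1) i = xg (q+1) i * xg (q+1) (j + q) := by
  have h1 : (PresentedGroup.mk (thompsonRels (q+1)))
      ((FreeGroup.of i)⁻¹ * FreeGroup.of j * FreeGroup.of i *
        (FreeGroup.of (j + (q+1) - 1))⁻¹) = 1 :=
    PresentedGroup.one_of_mem ⟨i, j, h, rfl⟩
  rw [map_mul, map_mul, map_mul, map_inv, map_inv] at h1
  have h2 : (xg (q+1) i)⁻¹ * xg (q+1) j * xg (q+1) i * (xg (q+1) (j+q))⁻¹ = 1 := h1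
  rw [mul_inv_eq_one, mul_assoc, inv_mul_eq_iff_eq_mul] at h2
  exact h2

/-- The product of a positive word. -/
def W (q : ℕ) (A : List ℕ) : FP (q+1) := (A.map (xg (q+1))).prod

@[simp] theorem W_nil : W q [] = 1 := rfl
@[simp] theorem W_cons (a : ℕ) (A : List ℕ) : W q (a :: A) = xg (q+1) a * W q A := by
  simp [W]

/-- The state space for the detecting action. -/
abbrev X (q : ℕ) := ℕ × (ℕ → Fin (q+1)) × ℤ

def fF (q i : ℕ) (x : X q) : X q :=
  if x.1 < i then x else if x.1 = i then (i + (x.2.1 0 : ℕ), fun n => x.2.1 (n+1), x.2.2 + 1)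
  else (x.1 + q, x.2.1, x.2.2)

def gF (q i : ℕ) (x : X q) : X q :=
  if x.1 < i then x else if h : x.1 - i < q + 1 then
    (i, fun n => Nat.casesOn n ⟨x.1 - i, h⟩ x.2.1, x.2.2 - 1)
  else (x.1 - q, x.2.1, x.2.2)

theorem gf (q i : ℕ) (x : X q) : gF q i (fF q i x) = x := by
  obtain ⟨k, w, z⟩ := x
  rcases lt_trichotomy k i with h | h | h
  · simp [fF, gF, h]
  · subst h
    have := (w 0).2
    simp only [fF, gF, lt_irrefl, if_false, if_true]
    rw [if_neg (by omega), dif_pos (by omega)]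
    refine Prod.ext rfl (Prod.ext ?_ (by simp))
    funext n
    cases n with
    | zero => apply Fin.ext; simp
    | succ n => rfl
  · have h1 : fF q i (k, w, z) = (k + q, w, z) := by
      simp only [fF]
      rw [if_neg (by omega), if_neg (by omega)]
    rw [h1]
    simp only [gF]
    rw [if_neg (by omega), dif_neg (by omega)]
    simp

theorem fg (q i : ℕ) (x : X q) : fF q i (gF q i x) = x := by
  obtain ⟨k, w, z⟩ := x
  by_cases h : k < i
  · simp [fF, gF, h]
  · by_cases h2 : k - i < q + 1
    · simp only [gF, if_neg h, dif_pos h2]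
      simp [fF]
      omega
    · simp only [gF, if_neg h, dif_neg h2]
      simp only [fF]
      rw [if_neg (by omega), if_neg (by omega)]
      refine Prod.ext ?_ rfl
      simp only
      omega

def eF (q i : ℕ) : Equiv.Perm (X q) := ⟨fF q i, gF q i, gf q i, fg q i⟩

theorem frel (q : ℕ) {i j : ℕ} (h : i < j) : eF q i * eF q j = eF q (j+q) * eF q i := by
  ext1 x
  obtain ⟨k, w, z⟩ := x
  change fF q i (fF q j (k, w, z)) = fF q (j+q) (fF q i (k, w, z))
  have h0 := (w 0).2
  rcases lt_trichotomy k i with h1 | h1 | h1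
  · have : k < j := by omega
    have : k < j + q := by omega
    simp [fF, *]
  · subst h1
    have h3 : k + (w 0 : ℕ) < j + q := by omega
    simp [fF, h, h3]
  · have h1' : ¬ k < i := by omega
    have h1'' : k ≠ i := by omega
    rcases lt_trichotomy k j with h2 | h2 | h2
    · simp [fF, *]
    · subst h2
      have : ¬ (k + (w 0 : ℕ) < i) := by omega
      have : (k + (w 0 : ℕ) ≠ i) := by omega
      simp [fF, *]
      omega
    · have : ¬ k < j := by omega
      have : k ≠ j := by omega
      have : ¬ k + q < i := by omega
      have : k + q ≠ i := by omega
      simp [fF, *]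

def phi (q : ℕ) : FP (q+1) →* Equiv.Perm (X q) :=
  PresentedGroup.toGroup (rels := thompsonRels (q+1)) (f := fun i => (eF q i)⁻¹) (by
    rintro r ⟨i, j, h, rfl⟩
    simp only [map_mul, map_inv, FreeGroup.lift_apply_of, inv_inv]
    have : j + (q+1) - 1 = j + q := rfl
    rw [this]
    have h2 := frel q h
    have h3 : eF q (j+q) = eF q i * eF q j * (eF q i)⁻¹ := by rw [h2]; group
    rw [h3]; group)

theorem phi_x (i : ℕ) : phi q (xg (q+1) i) = (eF q i)⁻¹ :=
  PresentedGroup.toGroup.of _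

theorem phi_fix {i j : ℕ} (h : i ≤ j) (z : ℤ) :
    phi q (xg (q+1) j) (i, fun _ => 0, z) = (i, fun _ => 0, z - if j = i then 1 else 0) := by
  rw [phi_x, Equiv.Perm.inv_eq_iff_eq]
  change _ = fF q j _
  rcases h.lt_or_eq with h | h
  · have : j ≠ i := by omega
    simp [fF, h, this]
  · subst h
    simp [fF]

theorem phi_W {i : ℕ} (A : List ℕ) (h : ∀ a ∈ A, i ≤ a) (z : ℤ) :
    phi q (W q A) (i, fun _ => 0, z) = (i, fun _ => 0, z - A.count i) := by
  induction A generalizing z with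
  | nil => simp
  | cons a A ih =>
    rw [W_cons, map_mul, Equiv.Perm.mul_apply, ih (fun b hb => h b (by simp [hb])),
      phi_fix (h a (by simp))]
    refine Prod.ext rfl (Prod.ext rfl ?_)
    simp only [List.count_cons, beq_iff_eq]
    split_ifs <;> push_cast <;> ring

theorem count_eq {i : ℕ} {A B C D : List ℕ} (hA : ∀ a ∈ A, i ≤ a) (hB : ∀ a ∈ B, i ≤ a)
    (hC : ∀ a ∈ C, i ≤ a) (hD : ∀ a ∈ D, i ≤ a)
    (h : W q A * (W q B)⁻¹ = W q C * (W q D)⁻¹) :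
    A.count i + D.count i = C.count i + B.count i := by
  have key : ∀ (A B : List ℕ), (∀ a ∈ A, i ≤ a) → (∀ a ∈ B, i ≤ a) →
      phi q (W q A * (W q B)⁻¹) (i, fun _ => 0, 0) =
        (i, fun _ => 0, (B.count i : ℤ) - A.count i) := by
    intro A B hA hB
    rw [map_mul, Equiv.Perm.mul_apply, map_inv]
    have : (phi q (W q B))⁻¹ (i, fun _ => 0, 0) = (i, fun _ => 0, (B.count i : ℤ)) := by
      rw [Equiv.Perm.inv_eq_iff_eq, phi_W B hB]; simp
    rw [this, phi_W A hA]
  have h1 := key A B hA hB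
  rw [h, key C D hC hD] at h1
  have h2 := congrArg (fun x : X q => x.2.2) h1
  simp only at h2
  omega

/-- Shift all the indices. -/
def sh (q : ℕ) (A : List ℕ) : List ℕ := A.map (· + q)

theorem W_sh {i : ℕ} (A : List ℕ) (h : ∀ a ∈ A, i < a) :
    W q A * xg (q+1) i = xg (q+1) i * W q (sh q A) := by
  induction A with
  | nil => simp [sh]
  | cons a A ih =>
    have := ih (fun b hb => h b (by simp [hb]))
    simp only [sh, List.map_cons, W_cons] at this ⊢
    rw [mul_assoc, this, ← mul_assoc, xrel q (h a (by simp)), mul_assoc]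

theorem conj_sh {i : ℕ} {A B : List ℕ} (hA : ∀ a ∈ A, i < a) (hB : ∀ a ∈ B, i < a) :
    (xg (q+1) i)⁻¹ * (W q A * (W q B)⁻¹) * xg (q+1) i = W q (sh q A) * (W q (sh q B))⁻¹ := by
  have h1 : W q (sh q A) = (xg (q+1) i)⁻¹ * (W q A * xg (q+1) i) := by rw [W_sh A hA]; group
  have h2 : W q (sh q B) = (xg (q+1) i)⁻¹ * (W q B * xg (q+1) i) := by rw [W_sh B hB]; group
  rw [h1, h2]; group

/-- The reducedness condition. -/
def Red (q : ℕ) (A B : List ℕ) : Prop :=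
  ∀ a ∈ A, a ∈ B → ∃ b, a < b ∧ b ≤ a + q ∧ (b ∈ A ∨ b ∈ B)

theorem head_of_mem {i : ℕ} {A : List ℕ} (hs : A.Pairwise (· ≤ ·)) (h : ∀ a ∈ A, i ≤ a)
    (hi : i ∈ A) : ∃ A1, A = i :: A1 := by
  cases A with
  | nil => simp at hi
  | cons a A =>
    refine ⟨A, ?_⟩
    have h1 := h a (by simp)
    rw [List.pairwise_cons] at hs
    rcases List.mem_cons.1 hi with h2 | h2
    · rw [h2]
    · have := hs.1 i h2
      rw [le_antisymm this h1]

theorem Red.drop {i : ℕ} {A B A1 B1 : List ℕ} (h : Red q A B) (hA : A = i :: A1 ∨ A = A1)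
    (hB : B = i :: B1 ∨ B = B1) (h1 : ∀ a ∈ A1, i ≤ a) : Red q A1 B1 := by
  intro a ha hb
  obtain ⟨b, h2, h3, h4⟩ := h a (by rcases hA with rfl | rfl <;> simp [ha])
    (by rcases hB with rfl | rfl <;> simp [hb])
  have hi := h1 a ha
  refine ⟨b, h2, h3, ?_⟩
  have hne : b ≠ i := by omega
  rcases hA with rfl | rfl <;> rcases hB with rfl | rfl <;> simpa [hne] using h4

theorem exists_min {A B : List ℕ} (h : A ≠ [] ∨ B ≠ []) :
    ∃ i, (i ∈ A ∨ i ∈ B) ∧ (∀ a ∈ A, i ≤ a) ∧ (∀ a ∈ B, i ≤ a) := by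
  classical
  have hex : ∃ i, i ∈ A ∨ i ∈ B := by
    rcases h with h | h
    · obtain ⟨i, hi⟩ := List.exists_mem_of_ne_nil _ h
      exact ⟨i, Or.inl hi⟩
    · obtain ⟨i, hi⟩ := List.exists_mem_of_ne_nil _ h
      exact ⟨i, Or.inr hi⟩
  exact ⟨Nat.find hex, Nat.find_spec hex, fun a ha => Nat.find_min' hex (Or.inl ha),
    fun a ha => Nat.find_min' hex (Or.inr ha)⟩

theorem lower (n : ℕ) : ∀ (A B C D : List ℕ) (c : ℕ), A.length + B.length = n →
    A.Pairwise (· ≤ ·) → B.Pairwise (· ≤ ·) → Red q A B →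
    (∀ a ∈ C, c ≤ a) → (∀ a ∈ D, c ≤ a) →
    W q A * (W q B)⁻¹ = W q C * (W q D)⁻¹ → (∀ a ∈ A, c ≤ a) ∧ (∀ a ∈ B, c ≤ a) := by
  induction n using Nat.strong_induction_on with
  | _ n ih =>
  intro A B C D c hn sA sB hR hC hD he
  by_cases hne : A ≠ [] ∨ B ≠ []
  swap
  · push Not at hne
    simp [hne.1, hne.2]
  obtain ⟨i, hi, hiA, hiB⟩ := exists_min hne
  by_cases hic : c ≤ i
  · exact ⟨fun a ha => hic.trans (hiA a ha), fun a ha => hic.trans (hiB a ha)⟩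
  exfalso
  have hcnt := count_eq hiA hiB (fun a ha => by have := hC a ha; omega)
    (fun a ha => by have := hD a ha; omega) he
  have hC0 : C.count i = 0 := List.count_eq_zero.2 (fun h => hic (hC i h))
  have hD0 : D.count i = 0 := List.count_eq_zero.2 (fun h => hic (hD i h))
  have hmem : i ∈ A ∧ i ∈ B := by
    rw [← List.count_pos_iff, ← List.count_pos_iff] at *
    omega
  obtain ⟨A1, rfl⟩ := head_of_mem sA hiA hmem.1
  obtain ⟨B1, rfl⟩ := head_of_mem sB hiB hmem.2
  have he2 : W q A1 * (W q B1)⁻¹ = W q (sh q C) * (W q (sh q D))⁻¹ := by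
    rw [← conj_sh (i := i) (fun a ha => by have := hC a ha; omega)
      (fun a ha => by have := hD a ha; omega), ← he, W_cons, W_cons]
    group
  have hR1 : Red q A1 B1 := hR.drop (Or.inl rfl) (Or.inl rfl) (fun a ha => hiA a (by simp [ha]))
  have shl : ∀ C : List ℕ, (∀ a ∈ C, c ≤ a) → ∀ a ∈ sh q C, c + q ≤ a := by
    intro C hC a ha
    simp only [sh, List.mem_map] at ha
    obtain ⟨b, hb, rfl⟩ := ha
    have := hC b hb
    omega
  have := ih (A1.length + B1.length) (by simp at hn; omega) A1 B1 (sh q C) (sh q D) (c+q) rfl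
    (List.pairwise_cons.1 sA).2 (List.pairwise_cons.1 sB).2 hR1 (shl C hC) (shl D hD) he2
  obtain ⟨b, hb1, hb2, hb3⟩ := hR i (by simp) (by simp)
  have hne : b ≠ i := by omega
  simp only [List.mem_cons, hne, false_or] at hb3
  rcases hb3 with hb3 | hb3
  · have := this.1 b hb3; omega
  · have := this.2 b hb3; omega

theorem mem_sh {A : List ℕ} {a : ℕ} (h : a ∈ A) : a + q ∈ sh q A := by
  simp [sh, h]

theorem sorted_sh {A : List ℕ} (h : A.Pairwise (· ≤ ·)) : (sh q A).Pairwise (· ≤ ·) := by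
  rw [sh, List.pairwise_map]
  exact h.imp (by intros; omega)

theorem upper (N n : ℕ) : ∀ (A B C D : List ℕ), C.length + D.length = n →
    A.Pairwise (· ≤ ·) → B.Pairwise (· ≤ ·) → Red q A B →
    C.Pairwise (· ≤ ·) → D.Pairwise (· ≤ ·) →
    (∀ a ∈ C, a ≤ N) → (∀ a ∈ D, a ≤ N) →
    W q A * (W q B)⁻¹ = W q C * (W q D)⁻¹ → (∀ a ∈ A, a ≤ N) ∧ (∀ a ∈ B, a ≤ N) := by
  induction n using Nat.strong_induction_on with
  | _ n ih =>
  intro A B C D hn sA sB hR sC sD hC hD he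
  by_cases hne : C ≠ [] ∨ D ≠ []
  swap
  · push Not at hne
    obtain ⟨rfl, rfl⟩ := hne
    have := fun c => lower _ A B [] [] c rfl sA sB hR (by simp) (by simp) he
    exact ⟨fun a ha => absurd ((this (a+1)).1 a ha) (by omega),
      fun a ha => absurd ((this (a+1)).2 a ha) (by omega)⟩
  obtain ⟨i, hi, hiC, hiD⟩ := exists_min hne
  obtain ⟨hiA, hiB⟩ := lower _ A B C D i rfl sA sB hR hiC hiD he
  have hiN : i ≤ N := hi.elim (hC i) (hD i)
  have hcnt := count_eq hiA hiB hiC hiD he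
  by_cases c1 : i ∈ A ∧ i ∈ C
  · obtain ⟨A1, rfl⟩ := head_of_mem sA hiA c1.1
    obtain ⟨C1, rfl⟩ := head_of_mem sC hiC c1.2
    have he2 : W q A1 * (W q B)⁻¹ = W q C1 * (W q D)⁻¹ := by
      rw [W_cons, W_cons, mul_assoc, mul_assoc] at he
      exact mul_left_cancel he
    have := ih (C1.length + D.length) (by simp at hn; omega) A1 B C1 D rfl
      (List.pairwise_cons.1 sA).2 sB
      (hR.drop (Or.inl rfl) (Or.inr rfl) (fun a ha => hiA a (by simp [ha])))
      (List.pairwise_cons.1 sC).2 sD (fun a ha => hC a (by simp [ha])) hD he2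
    refine ⟨fun a ha => ?_, this.2⟩
    rcases List.mem_cons.1 ha with rfl | ha
    · exact hiN
    · exact this.1 a ha
  by_cases c2 : i ∈ B ∧ i ∈ D
  · obtain ⟨B1, rfl⟩ := head_of_mem sB hiB c2.1
    obtain ⟨D1, rfl⟩ := head_of_mem sD hiD c2.2
    have he2 : W q A * (W q B1)⁻¹ = W q C * (W q D1)⁻¹ := by
      rw [W_cons, W_cons, mul_inv_rev, mul_inv_rev, ← mul_assoc, ← mul_assoc] at he
      exact mul_right_cancel he
    have := ih (C.length + D1.length) (by simp at hn; omega) A B1 C D1 rfl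
      sA (List.pairwise_cons.1 sB).2
      (hR.drop (Or.inr rfl) (Or.inl rfl) hiA)
      sC (List.pairwise_cons.1 sD).2 hC (fun a ha => hD a (by simp [ha])) he2
    refine ⟨this.1, fun a ha => ?_⟩
    rcases List.mem_cons.1 ha with rfl | ha
    · exact hiN
    · exact this.2 a ha
  have hc : (i ∉ A ∧ i ∉ B) ∧ (i ∈ C ∧ i ∈ D) := by
    rw [← List.count_pos_iff, ← List.count_pos_iff] at *
    rw [← List.count_pos_iff, ← List.count_pos_iff]
    omega
  obtain ⟨C1, rfl⟩ := head_of_mem sC hiC hc.2.1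
  obtain ⟨D1, rfl⟩ := head_of_mem sD hiD hc.2.2
  have he2 : W q (sh q A) * (W q (sh q B))⁻¹ = W q C1 * (W q D1)⁻¹ := by
    rw [← conj_sh (i := i) (fun a ha => lt_of_le_of_ne (hiA a ha) (by rintro rfl; exact hc.1.1 ha))
      (fun a ha => lt_of_le_of_ne (hiB a ha) (by rintro rfl; exact hc.1.2 ha)), he, W_cons, W_cons]
    group
  have hR1 : Red q (sh q A) (sh q B) := by
    intro a ha hb
    simp only [sh, List.mem_map] at ha hb
    obtain ⟨a, ha, rfl⟩ := ha
    obtain ⟨a', hb, h'⟩ := hb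
    obtain rfl : a' = a := by omega
    obtain ⟨b, h1, h2, h3⟩ := hR a' ha hb
    exact ⟨b + q, by omega, by omega, h3.imp mem_sh mem_sh⟩
  have := ih (C1.length + D1.length) (by simp at hn; omega) _ _ C1 D1 rfl
    (sorted_sh sA) (sorted_sh sB) hR1
    (List.pairwise_cons.1 sC).2 (List.pairwise_cons.1 sD).2
    (fun a ha => hC a (by simp [ha])) (fun a ha => hD a (by simp [ha])) he2
  exact ⟨fun a ha => by have := this.1 _ (mem_sh ha); omega,
    fun a ha => by have := this.2 _ (mem_sh ha); omega⟩

/-- Left multiplication by a positive generator. -/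
theorem insL (A : List ℕ) : ∀ (i N : ℕ), A.Pairwise (· ≤ ·) → (∀ a ∈ A, a ≤ N) →
    i + q * A.length ≤ N → ∃ A', A'.Pairwise (· ≤ ·) ∧ A'.length = A.length + 1 ∧
      (∀ a ∈ A', a ≤ N) ∧ (∀ c, c ≤ i → (∀ a ∈ A, c ≤ a) → ∀ a ∈ A', c ≤ a) ∧
      xg (q+1) i * W q A = W q A' := by
  induction A with
  | nil =>
    intro i N _ _ h
    exact ⟨[i], by simp, by simp, by simpa using h, by simp, by simp⟩
  | cons b A ih =>
    intro i N sA hA h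
    simp only [List.length_cons, mul_add, mul_one] at h
    rw [List.pairwise_cons] at sA
    by_cases hib : i ≤ b
    · refine ⟨i :: b :: A, ?_, by simp, ?_, ?_, by simp⟩
      · rw [List.pairwise_cons]
        refine ⟨fun a ha => ?_, List.pairwise_cons.2 sA⟩
        rcases List.mem_cons.1 ha with rfl | ha
        · exact hib
        · exact hib.trans (sA.1 a ha)
      · intro a ha
        rcases List.mem_cons.1 ha with rfl | ha
        · omega
        · exact hA a ha
      · intro c hc hc2 a ha
        rcases List.mem_cons.1 ha with rfl | ha
        · exact hc
        · exact hc2 a ha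
    · obtain ⟨A', s1, l1, u1, lo1, e1⟩ := ih (i+q) N sA.2 (fun a ha => hA a (by simp [ha])) (by omega)
      refine ⟨b :: A', ?_, by simp [l1], ?_, ?_, ?_⟩
      · exact List.pairwise_cons.2 ⟨lo1 b (by omega) sA.1, s1⟩
      · intro a ha
        rcases List.mem_cons.1 ha with rfl | ha
        · exact hA a (by simp)
        · exact u1 a ha
      · intro c hc hc2 a ha
        rcases List.mem_cons.1 ha with rfl | ha
        · exact hc2 a (by simp)
        · exact lo1 c (by omega) (fun a ha => hc2 a (by simp [ha])) a ha
      · rw [W_cons, W_cons, ← e1, ← mul_assoc, xrel q (show b < i by omega), mul_assoc]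

/-- Right multiplication by a positive generator. -/
theorem insR (B : List ℕ) (k N : ℕ) (sB : B.Pairwise (· ≤ ·)) (hB : ∀ a ∈ B, a + q ≤ N)
    (hk : k ≤ N) : ∃ B', B'.Pairwise (· ≤ ·) ∧ B'.length = B.length + 1 ∧
      (∀ a ∈ B', a ≤ N) ∧ (∀ c, c ≤ k → (∀ a ∈ B, c ≤ a) → ∀ a ∈ B', c ≤ a) ∧
      W q B * xg (q+1) k = W q B' := by
  induction B with
  | nil => exact ⟨[k], by simp, by simp, by simpa using hk, by simp, by simp⟩
  | cons b B ih =>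
    have sB' := List.pairwise_cons.1 sB
    by_cases hbk : b ≤ k
    · obtain ⟨B', s1, l1, u1, lo1, e1⟩ := ih sB'.2 (fun a ha => hB a (by simp [ha]))
      refine ⟨b :: B', ?_, by simp [l1], ?_, ?_, ?_⟩
      · exact List.pairwise_cons.2 ⟨lo1 b hbk sB'.1, s1⟩
      · intro a ha
        rcases List.mem_cons.1 ha with rfl | ha
        · have := hB a (by simp)
          omega
        · exact u1 a ha
      · intro c hc hc2 a ha
        rcases List.mem_cons.1 ha with rfl | ha
        · exact hc2 a (by simp)
        · exact lo1 c hc (fun a ha => hc2 a (by simp [ha])) a ha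
      · rw [W_cons, W_cons, ← e1, mul_assoc]
    · have hgt : ∀ a ∈ b :: B, k < a := by
        intro a ha
        rcases List.mem_cons.1 ha with rfl | ha
        · omega
        · have := sB'.1 a ha; omega
      have hsh : ∀ a ∈ sh q (b :: B), k ≤ a ∧ a ≤ N := by
        intro a ha
        rw [sh, List.mem_map] at ha
        obtain ⟨a, ha, rfl⟩ := ha
        have := hgt a ha
        have := hB a ha
        omega
      refine ⟨k :: sh q (b :: B), ?_, by simp [sh], ?_, ?_, ?_⟩
      · exact List.pairwise_cons.2 ⟨fun a ha => (hsh a ha).1, sorted_sh sB⟩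
      · intro a ha
        rcases List.mem_cons.1 ha with rfl | ha
        · exact hk
        · exact (hsh a ha).2
      · intro c hc _ a ha
        rcases List.mem_cons.1 ha with rfl | ha
        · exact hc
        · exact hc.trans (hsh a ha).1
      · rw [W_sh _ hgt, W_cons k]

/-- Left multiplication of a positive word by the inverse of a generator. -/
theorem insInv (A : List ℕ) : ∀ (i N : ℕ), A.Pairwise (· ≤ ·) → (∀ a ∈ A, a + q ≤ N) →
    i + q * A.length ≤ N → ∃ A', A'.Pairwise (· ≤ ·) ∧ A'.length ≤ A.length ∧
      (∀ a ∈ A', a ≤ N) ∧ (∀ c, (∀ a ∈ A, c ≤ a) → ∀ a ∈ A', c ≤ a) ∧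
      ((xg (q+1) i)⁻¹ * W q A = W q A' ∨
        ∃ k, k ≤ N ∧ (xg (q+1) i)⁻¹ * W q A = W q A' * (xg (q+1) k)⁻¹) := by
  induction A with
  | nil =>
    intro i N _ _ h
    exact ⟨[], by simp, by simp, by simp, by simp, Or.inr ⟨i, by simpa using h, by simp⟩⟩
  | cons b A ih =>
    intro i N sA hA h
    simp only [List.length_cons, mul_add, mul_one] at h
    have sA' := List.pairwise_cons.1 sA
    rcases lt_trichotomy b i with hbi | hbi | hbi
    · obtain ⟨A', s1, l1, u1, lo1, e1⟩ :=
        ih (i+q) N sA'.2 (fun a ha => hA a (by simp [ha])) (by omega)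
      have hx : (xg (q+1) i)⁻¹ * xg (q+1) b = xg (q+1) b * (xg (q+1) (i+q))⁻¹ := by
        rw [inv_mul_eq_iff_eq_mul, ← mul_assoc, eq_mul_inv_iff_mul_eq, xrel q hbi]
      refine ⟨b :: A', ?_, by simpa using l1, ?_, ?_, ?_⟩
      · exact List.pairwise_cons.2 ⟨lo1 b sA'.1, s1⟩
      · intro a ha
        rcases List.mem_cons.1 ha with rfl | ha
        · have := hA a (by simp)
          omega
        · exact u1 a ha
      · intro c hc2 a ha
        rcases List.mem_cons.1 ha with rfl | ha
        · exact hc2 a (by simp)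
        · exact lo1 c (fun a ha => hc2 a (by simp [ha])) a ha
      · rw [W_cons, W_cons, ← mul_assoc, hx, mul_assoc]
        rcases e1 with e1 | ⟨k, hk, e1⟩
        · left; rw [e1]
        · right; exact ⟨k, hk, by rw [e1, mul_assoc]⟩
    · subst hbi
      refine ⟨A, sA'.2, by simp, fun a ha => ?_, fun c hc a ha => hc a (by simp [ha]), Or.inl ?_⟩
      · have := hA a (by simp [ha]); omega
      · rw [W_cons, inv_mul_cancel_left]
    · have hgt : ∀ a ∈ b :: A, i < a := by
        intro a ha
        rcases List.mem_cons.1 ha with rfl | ha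
        · omega
        · have := sA'.1 a ha; omega
      refine ⟨sh q (b :: A), sorted_sh sA, by simp [sh], ?_, ?_, Or.inr ⟨i, by omega, ?_⟩⟩
      · intro a ha
        rw [sh, List.mem_map] at ha
        obtain ⟨a, ha, rfl⟩ := ha
        exact hA a ha
      · intro c hc a ha
        rw [sh, List.mem_map] at ha
        obtain ⟨a, ha, rfl⟩ := ha
        have := hc a ha
        omega
      · rw [eq_mul_inv_iff_mul_eq, mul_assoc, W_sh _ hgt, inv_mul_cancel_left]

theorem semi (w : List (FP (q+1)))
    (hw : ∀ g ∈ w, (∃ i, i < q+1 ∧ g = xg (q+1) i) ∨ (∃ i, i < q+1 ∧ g⁻¹ = xg (q+1) i)) :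
    ∃ C D : List ℕ, C.Pairwise (· ≤ ·) ∧ D.Pairwise (· ≤ ·) ∧
      C.length ≤ w.length ∧ D.length ≤ w.length ∧
      (∀ a ∈ C, a ≤ q * w.length) ∧ (∀ a ∈ D, a ≤ q * w.length) ∧
      w.prod = W q C * (W q D)⁻¹ := by
  induction w with
  | nil => exact ⟨[], [], by simp⟩
  | cons g w ih =>
    obtain ⟨C, D, sC, sD, lC, lD, uC, uD, e⟩ := ih (fun g hg => hw g (by simp [hg]))
    have hmul : q * (g :: w).length = q * w.length + q := by simp [mul_add]
    have hle := Nat.mul_le_mul_left q lC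
    simp only [hmul, List.prod_cons, e]
    rw [List.length_cons]
    rcases hw g (by simp) with ⟨i, hi, rfl⟩ | ⟨i, hi, hg⟩
    · obtain ⟨C', s1, l1, u1, -, e1⟩ := insL (q := q) C i (q * w.length + q) sC
        (fun a ha => by have := uC a ha; omega) (by omega)
      refine ⟨C', D, s1, sD, by omega, by omega, u1,
        fun a ha => by have := uD a ha; omega, ?_⟩
      rw [← mul_assoc, e1]
    · obtain rfl : g = (xg (q+1) i)⁻¹ := by rw [← hg, inv_inv]
      obtain ⟨C', s1, l1, u1, -, e1⟩ := insInv (q := q) C i (q * w.length + q) sC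
        (fun a ha => by have := uC a ha; omega) (by omega)
      rcases e1 with e1 | ⟨k, hk, e1⟩
      · refine ⟨C', D, s1, sD, by omega, by omega, u1,
          fun a ha => by have := uD a ha; omega, ?_⟩
        rw [← mul_assoc, e1]
      · obtain ⟨D', s2, l2, u2, -, e2⟩ := insR (q := q) D k (q * w.length + q) sD
          (fun a ha => by have := uD a ha; omega) hk
        refine ⟨C', D', s1, s2, by omega, by omega, u1, u2, ?_⟩
        rw [← mul_assoc, e1, ← e2, mul_inv_rev, mul_assoc]

theorem gen (hq : 1 ≤ q) (x : FP (q+1)) :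
    ∃ w : List (FP (q+1)), (∀ g ∈ w, g ∈ { g : FP (q+1) | ∃ i, i < q+1 ∧ g = xg (q+1) i } ∨
      g⁻¹ ∈ { g : FP (q+1) | ∃ i, i < q+1 ∧ g = xg (q+1) i }) ∧ w.prod = x := by
  set H := Subgroup.closure { g : FP (q+1) | ∃ i, i < q+1 ∧ g = xg (q+1) i } with hH
  have hx : ∀ n, xg (q+1) n ∈ H := by
    intro n
    induction n using Nat.strong_induction_on with
    | _ n ih =>
    by_cases hn : n < q + 1
    · exact Subgroup.subset_closure ⟨n, hn, rfl⟩
    · have h1 := xrel q (show 0 < n - q by omega)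
      rw [show n - q + q = n by omega] at h1
      have h2 : xg (q+1) n = (xg (q+1) 0)⁻¹ * (xg (q+1) (n-q) * xg (q+1) 0) := by
        rw [h1]; group
      rw [h2]
      have h0 : xg (q+1) 0 ∈ H := Subgroup.subset_closure ⟨0, by omega, rfl⟩
      exact H.mul_mem (H.inv_mem h0) (H.mul_mem (ih _ (by omega)) h0)
  have htop : (⊤ : Subgroup (FP (q+1))) ≤ H := by
    have : Subgroup.closure (Set.range (xg (q+1))) = ⊤ :=
      PresentedGroup.closure_range_of (thompsonRels (q+1))
    rw [← this, Subgroup.closure_le]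
    rintro _ ⟨n, rfl⟩
    exact hx n
  have hxH : x ∈ H.toSubmonoid := htop trivial
  rw [hH, Subgroup.closure_toSubmonoid] at hxH
  exact Submonoid.exists_list_of_mem_closure hxH

/-- The word with exponents. -/
def word {n : ℕ} (i r : Fin n → ℕ) : List ℕ :=
  (List.ofFn fun k => List.replicate (r k) (i k)).flatten

theorem W_word {n : ℕ} (i r : Fin n → ℕ) :
    W q (word i r) = (List.ofFn fun k => xg (q+1) (i k) ^ r k).prod := by
  simp only [W, word, List.map_flatten, List.prod_flatten, List.map_ofFn]
  congr 2
  funext k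
  simp

theorem mem_word {n : ℕ} {i r : Fin n → ℕ} (hr : ∀ k, 1 ≤ r k) (a : ℕ) :
    a ∈ word i r ↔ ∃ k, i k = a := by
  simp only [word, List.mem_flatten, List.mem_ofFn]
  constructor
  · rintro ⟨_, ⟨k, rfl⟩, h⟩
    exact ⟨k, (List.eq_of_mem_replicate h).symm⟩
  · rintro ⟨k, rfl⟩
    refine ⟨_, ⟨k, rfl⟩, ?_⟩
    have := hr k
    simp
    omega

theorem sorted_word {n : ℕ} {i r : Fin n → ℕ} (hi : StrictMono i) :
    (word i r).Pairwise (· ≤ ·) := by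
  rw [word, List.pairwise_flatten]
  constructor
  · intro l hl
    rw [List.mem_ofFn] at hl
    obtain ⟨k, rfl⟩ := hl
    simp [List.pairwise_replicate]
  · rw [List.pairwise_ofFn]
    intro a b hab x hx y hy
    rw [List.eq_of_mem_replicate hx, List.eq_of_mem_replicate hy]
    exact (hi hab).le

end S17

/-- The largest indices `iₙ`, `jₘ` appearing in the normal form of
`x ∈ F(p)` are bounded by `(p-1)·|x|_p`. -/
theorem statement17 (p : ℕ) (hp : 2 ≤ p) (x : FP p) (d : NFData p)
    (hd : d.IsNormalFormOf x) :
    (∀ hn : 0 < d.n, d.i ⟨d.n - 1, Nat.sub_lt hn Nat.one_pos⟩ ≤ (p - 1) * wlen p x) ∧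
      ∀ hm : 0 < d.m, d.j ⟨d.m - 1, Nat.sub_lt hm Nat.one_pos⟩ ≤ (p - 1) * wlen p x := by
  obtain ⟨q, rfl⟩ : ∃ q, p = q + 1 := ⟨p - 1, by omega⟩
  obtain ⟨hi, hj, hr, hs, -, hred, rfl⟩ := hd
  have hne : { n : ℕ | ∃ w : List (FP (q+1)), w.length = n ∧
      (∀ g ∈ w, g ∈ { g : FP (q+1) | ∃ i, i < q+1 ∧ g = xg (q+1) i } ∨
        g⁻¹ ∈ { g : FP (q+1) | ∃ i, i < q+1 ∧ g = xg (q+1) i }) ∧ w.prod = d.elem }.Nonempty := by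
    obtain ⟨w, h1, h2⟩ := S17.gen (by omega) d.elem
    exact ⟨w.length, w, rfl, h1, h2⟩
  obtain ⟨w, hl, hw, hprod⟩ := Nat.sInf_mem hne
  have hl' : w.length = wlen (q+1) d.elem := hl
  obtain ⟨C, D, sC, sD, -, -, uC, uD, e⟩ := S17.semi w hw
  have hR : S17.Red q (S17.word d.i d.r) (S17.word d.j d.s) := by
    intro a ha hb
    rw [S17.mem_word hr] at ha
    rw [S17.mem_word hs] at hb
    obtain ⟨b, h1, h2, h3⟩ := hred a ha hb
    refine ⟨b, h1, h2, ?_⟩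
    rw [S17.mem_word hr, S17.mem_word hs]
    exact h3
  have := S17.upper (q * w.length) _ _ _ C D rfl (S17.sorted_word hi) (S17.sorted_word hj) hR
    sC sD uC uD (by rw [← e, hprod, S17.W_word, S17.W_word]; rfl)
  rw [← hl']
  exact ⟨fun hn => this.1 _ ((S17.mem_word hr _).2 ⟨_, rfl⟩),
    fun hm => this.2 _ ((S17.mem_word hs _).2 ⟨_, rfl⟩)⟩
end
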